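/- arXiv:1112.1346 — 2 statements merged into one kernel-verified Lean document; each statement's English description precedes it below -/
import Mathlib

section
/- For any two bilinear forms A and B on an n-dimensional real inner product space (V,g) and any 1 ≤ k ≤ n, s_k(A+B) = Σ_{i=0}^k (1/(k−i)!)·⟨s_{(k−i,i)}(A), B^{k−i}⟩. -/
noncomputable section

open Finset

/-- Double forms over an `n`-dimensional real inner product space, described by their
coefficients in a fixed orthonormal basis: a `(p,q)`-double form corresponds to a function
supported on pairs of subsets of cardinalities `p` and `q`. -/
abbrev DForm (n : ℕ) := Finset (Fin n) → Finset (Fin n) → ℝ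

namespace DForm

variable {n : ℕ}

/-- Sign of the shuffle placing the elements of `A` (in increasing order) before
those of `B` (in increasing order). -/
def shuffleSign (A B : Finset (Fin n)) : ℝ :=
  (-1 : ℝ) ^ (∑ x ∈ B, (A.filter fun a => x < a).card)

/-- The exterior product of double forms. -/
def wedge (ω₁ ω₂ : DForm n) : DForm n := fun I J =>
  ∑ A ∈ I.powerset, ∑ B ∈ J.powerset,
    shuffleSign A (I \ A) * shuffleSign B (J \ B) * ω₁ A B * ω₂ (I \ A) (J \ B)

/-- Exterior powers `ω^k` of a double form. -/
def dpow (ω : DForm n) : ℕ → DForm n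
  | 0 => fun I J => if I = ∅ ∧ J = ∅ then 1 else 0
  | k + 1 => wedge ω (dpow ω k)

/-- The double Hodge star operator. -/
def hstar (ω : DForm n) : DForm n := fun I J =>
  shuffleSign Iᶜ I * shuffleSign Jᶜ J * ω Iᶜ Jᶜ

/-- The contraction `c` of double forms. -/
def contr (ω : DForm n) : DForm n := fun I J =>
  ∑ j : Fin n,
    if j ∈ I ∨ j ∈ J then 0
    else shuffleSign {j} I * shuffleSign {j} J * ω (insert j I) (insert j J)

/-- Iterated contraction `c^k`. -/
def citer (ω : DForm n) : ℕ → DForm n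
  | 0 => ω
  | k + 1 => contr (citer ω k)

/-- The inner product of double forms. -/
def dinner (ω₁ ω₂ : DForm n) : ℝ :=
  ∑ I : Finset (Fin n), ∑ J : Finset (Fin n), ω₁ I J * ω₂ I J

/-- The transpose `ω^t` of a double form. -/
def transp (ω : DForm n) : DForm n := fun I J => ω J I

/-- The composition (Greub) product `ω₁ ∘ ω₂` of double forms. -/
def comp (ω₁ ω₂ : DForm n) : DForm n := fun I J =>
  ∑ K : Finset (Fin n), ω₂ I K * ω₁ K J

/-- The scalar value of a `(0,0)`-double form. -/
def toScalar (ω : DForm n) : ℝ := ω ∅ ∅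

/-- The metric, as a `(1,1)`-double form. -/
def gMetric (n : ℕ) : DForm n := fun I J => if I = J ∧ I.card = 1 then 1 else 0

/-- Iterated composition power `ω^{∘r}` of a `(1,1)`-double form, with `ω^{∘0} = g`. -/
def cpow (ω : DForm n) : ℕ → DForm n
  | 0 => gMetric n
  | r + 1 => comp ω (cpow ω r)

/-- The `(1,1)`-double form associated to a bilinear form, given by its matrix in the
orthonormal basis. -/
def ofMatrix (h : Matrix (Fin n) (Fin n) ℝ) : DForm n := fun I J =>
  ∑ i : Fin n, ∑ j : Fin n, if I = {i} ∧ J = {j} then h i j else 0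

/-- `ω` is a `(p,q)`-double form. -/
def IsOfDeg (ω : DForm n) (p q : ℕ) : Prop :=
  ∀ I J : Finset (Fin n), ω I J ≠ 0 → I.card = p ∧ J.card = q

/-- `ω` is a symmetric double form. -/
def IsSym (ω : DForm n) : Prop := ∀ I J, ω I J = ω J I

/-- The sign relating `e_{v 0} ∧ ⋯ ∧ e_{v (p-1)}` to the corresponding increasing
basis `p`-vector (and `0` if the indices are not pairwise distinct). -/
def tupleSign {p : ℕ} (v : Fin p → Fin n) : ℝ :=
  if Function.Injective v then (((Equiv.Perm.sign (Tuple.sort v)) : ℤ) : ℝ) else 0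

/-- Evaluation of a double form on wedges of basis vectors indexed by arbitrary tuples. -/
def evalT (ω : DForm n) {p q : ℕ} (v : Fin p → Fin n) (w : Fin q → Fin n) : ℝ :=
  tupleSign v * tupleSign w * ω (Finset.image v Finset.univ) (Finset.image w Finset.univ)

/-- The first Bianchi identity for a `(2,2)`-double form:
`R(x∧y,z∧t) + R(y∧z,x∧t) + R(z∧x,y∧t) = 0`. -/
def Bianchi2 (R : DForm n) : Prop :=
  ∀ x y z t : Fin n,
    evalT R ![x, y] ![z, t] + evalT R ![y, z] ![x, t] + evalT R ![z, x] ![y, t] = 0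

/-- The first Bianchi identity for a `(p,p)`-double form. -/
def FirstBianchi (ω : DForm n) (p : ℕ) : Prop :=
  ∀ (x : Fin (p + 1) → Fin n) (y : Fin (p - 1) → Fin n),
    ∑ j : Fin (p + 1),
      (-1 : ℝ) ^ (j : ℕ) * evalT ω (x ∘ Fin.succAbove j) (Fin.cons (x j) y) = 0

/-- The characteristic coefficient `s_k(h)` of a bilinear form `h`, defined through the
characteristic polynomial: `det(h - λ g) = ∑ (-1)^(n-i) s_i(h) λ^(n-i)`. -/
def sInv (h : Matrix (Fin n) (Fin n) ℝ) (k : ℕ) : ℝ :=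
  (-1 : ℝ) ^ k * (Matrix.charpoly h).coeff (n - k)

/-- The `k`-th cofactor (Newton) transformation `t_k(h) = (1/(k!(n-1-k)!)) *(g^{n-1-k} h^k)`. -/
def tInv (h : Matrix (Fin n) (Fin n) ℝ) (k : ℕ) : DForm n :=
  ((k.factorial * (n - 1 - k).factorial : ℕ) : ℝ)⁻¹ •
    hstar (wedge (dpow (gMetric n) (n - 1 - k)) (dpow (ofMatrix h) k))

/-- The `(r,q)`-cofactor `s_{(r,q)}(h) = (1/(q!(n-q-r)!)) *(g^{n-q-r} h^q)`. -/
def sCof (h : Matrix (Fin n) (Fin n) ℝ) (r q : ℕ) : DForm n :=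
  ((q.factorial * (n - q - r).factorial : ℕ) : ℝ)⁻¹ •
    hstar (wedge (dpow (gMetric n) (n - q - r)) (dpow (ofMatrix h) q))

end DForm

namespace DForm

lemma shuffleSign_union_left {n : ℕ} {A B : Finset (Fin n)} (C : Finset (Fin n))
    (h : Disjoint A B) :
    shuffleSign (A ∪ B) C = shuffleSign A C * shuffleSign B C := by
  unfold shuffleSign
  rw [← pow_add, ← Finset.sum_add_distrib]
  congr 1
  refine Finset.sum_congr rfl fun x _ => ?_
  rw [Finset.filter_union, Finset.card_union_of_disjoint]
  exact Finset.disjoint_filter_filter h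

lemma shuffleSign_union_right {n : ℕ} {B C : Finset (Fin n)} (A : Finset (Fin n))
    (h : Disjoint B C) :
    shuffleSign A (B ∪ C) = shuffleSign A B * shuffleSign A C := by
  unfold shuffleSign
  rw [← pow_add, Finset.sum_union h]

lemma sum_powerset_powerset {n : ℕ} (I : Finset (Fin n))
    (F : Finset (Fin n) → Finset (Fin n) → Finset (Fin n) → ℝ) :
    ∑ A ∈ I.powerset, ∑ A' ∈ A.powerset, F A' (A \ A') (I \ A) =
      ∑ A ∈ I.powerset, ∑ D ∈ (I \ A).powerset, F A D ((I \ A) \ D) := by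
  rw [Finset.sum_sigma', Finset.sum_sigma']
  refine Finset.sum_bij' (fun p _ => ⟨p.2, p.1 \ p.2⟩) (fun p _ => ⟨p.1 ∪ p.2, p.1⟩) ?_ ?_ ?_ ?_ ?_
  · rintro ⟨A, A'⟩ h
    simp only [Finset.mem_sigma, Finset.mem_powerset] at h ⊢
    exact ⟨h.2.trans h.1, Finset.sdiff_subset_sdiff h.1 le_rfl⟩
  · rintro ⟨A, A'⟩ h
    simp only [Finset.mem_sigma, Finset.mem_powerset] at h ⊢
    exact ⟨Finset.union_subset h.1 (h.2.trans Finset.sdiff_subset), Finset.subset_union_left⟩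
  · rintro ⟨A, A'⟩ h
    simp only [Finset.mem_sigma, Finset.mem_powerset] at h ⊢
    simp [Finset.union_sdiff_of_subset h.2]
  · rintro ⟨A, A'⟩ h
    simp only [Finset.mem_sigma, Finset.mem_powerset] at h ⊢
    have : Disjoint A A' := (Finset.disjoint_sdiff).mono_right h.2
    simp [Finset.union_sdiff_cancel_left this]
  · rintro ⟨A, A'⟩ h
    simp only [Finset.mem_sigma, Finset.mem_powerset] at h ⊢
    congr 1
    rw [sdiff_sdiff_left, Finset.sup_eq_union, Finset.union_sdiff_of_subset h.2]

lemma wedge_assoc {n : ℕ} (a b c : DForm n) :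
    wedge (wedge a b) c = wedge a (wedge b c) := by
  funext I J
  let S : Finset (Fin n) → Finset (Fin n) → Finset (Fin n) → ℝ := fun P Q R =>
    shuffleSign P Q * shuffleSign P R * shuffleSign Q R
  have hL : wedge (wedge a b) c I J =
      ∑ A ∈ I.powerset, ∑ A' ∈ A.powerset, ∑ B ∈ J.powerset, ∑ B' ∈ B.powerset,
        S A' (A \ A') (I \ A) * S B' (B \ B') (J \ B) *
          (a A' B' * b (A \ A') (B \ B') * c (I \ A) (J \ B)) := by
    unfold wedge
    refine Finset.sum_congr rfl fun A hA => ?_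
    rw [Finset.sum_comm]
    refine Finset.sum_congr rfl fun B hB => ?_
    rw [Finset.mul_sum, Finset.sum_mul]
    refine Finset.sum_congr rfl fun A' hA' => ?_
    rw [Finset.mul_sum, Finset.sum_mul]
    refine Finset.sum_congr rfl fun B' hB' => ?_
    rw [Finset.mem_powerset] at *
    have e1 := shuffleSign_union_left (I \ A) (Finset.disjoint_sdiff (s := A') (t := A))
    have e2 := shuffleSign_union_left (J \ B) (Finset.disjoint_sdiff (s := B') (t := B))
    rw [Finset.union_sdiff_of_subset hA'] at e1
    rw [Finset.union_sdiff_of_subset hB'] at e2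
    rw [e1, e2]
    simp only [S]
    ring
  have hR : wedge a (wedge b c) I J =
      ∑ A ∈ I.powerset, ∑ D ∈ (I \ A).powerset, ∑ B ∈ J.powerset, ∑ E ∈ (J \ B).powerset,
        S A D ((I \ A) \ D) * S B E ((J \ B) \ E) *
          (a A B * b D E * c ((I \ A) \ D) ((J \ B) \ E)) := by
    unfold wedge
    refine Finset.sum_congr rfl fun A hA => ?_
    rw [Finset.sum_comm]
    refine Finset.sum_congr rfl fun B hB => ?_
    rw [Finset.mul_sum]
    refine Finset.sum_congr rfl fun D hD => ?_
    rw [Finset.mul_sum]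
    refine Finset.sum_congr rfl fun E hE => ?_
    rw [Finset.mem_powerset] at *
    have e1 := shuffleSign_union_right A (Finset.disjoint_sdiff (s := D) (t := I \ A))
    have e2 := shuffleSign_union_right B (Finset.disjoint_sdiff (s := E) (t := J \ B))
    rw [Finset.union_sdiff_of_subset hD] at e1
    rw [Finset.union_sdiff_of_subset hE] at e2
    rw [e1, e2]
    simp only [S]
    ring
  rw [hL, hR]
  rw [← sum_powerset_powerset I (fun P Q R => ∑ B ∈ J.powerset, ∑ E ∈ (J \ B).powerset,
        S P Q R * S B E ((J \ B) \ E) * (a P B * b Q E * c R ((J \ B) \ E)))]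
  refine Finset.sum_congr rfl fun A hA => Finset.sum_congr rfl fun A' hA' => ?_
  exact sum_powerset_powerset J (fun P Q R => S A' (A \ A') (I \ A) * S P Q R *
          (a A' P * b (A \ A') Q * c (I \ A) R))

/-- The unit of the wedge product. -/
def oneForm (n : ℕ) : DForm n := fun I J => if I = ∅ ∧ J = ∅ then 1 else 0

lemma one_wedge {n : ℕ} (a : DForm n) : wedge (oneForm n) a = a := by
  funext I J
  unfold wedge oneForm
  rw [Finset.sum_eq_single ∅, Finset.sum_eq_single ∅]
  · simp [shuffleSign]
  · intro B _ hB; simp [hB]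
  · simp
  · intro B _ hB; simp [hB]
  · simp

lemma wedge_one {n : ℕ} (a : DForm n) : wedge a (oneForm n) = a := by
  funext I J
  unfold wedge oneForm
  rw [Finset.sum_eq_single I, Finset.sum_eq_single J]
  · simp [shuffleSign]
  · intro B hB hB'
    rw [Finset.mem_powerset] at hB
    have : ¬ (J ⊆ B) := fun h => hB' (Finset.Subset.antisymm hB h)
    simp [this]
  · simp
  · intro B hB hB'
    rw [Finset.mem_powerset] at hB
    have : ¬ (I ⊆ B) := fun h => hB' (Finset.Subset.antisymm hB h)
    simp [this]
  · simp

lemma wedge_add {n : ℕ} (a b c : DForm n) : wedge a (b + c) = wedge a b + wedge a c := by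
  funext I J
  simp only [wedge, Pi.add_apply, mul_add, Finset.sum_add_distrib]

lemma add_wedge {n : ℕ} (a b c : DForm n) : wedge (a + b) c = wedge a c + wedge b c := by
  funext I J
  simp only [wedge, Pi.add_apply, mul_add, add_mul, Finset.sum_add_distrib]

lemma wedge_smul {n : ℕ} (t : ℝ) (a b : DForm n) : wedge a (t • b) = t • wedge a b := by
  funext I J
  simp only [wedge, Pi.smul_apply, smul_eq_mul, Finset.mul_sum]
  refine Finset.sum_congr rfl fun _ _ => Finset.sum_congr rfl fun _ _ => by ring

lemma smul_wedge {n : ℕ} (t : ℝ) (a b : DForm n) : wedge (t • a) b = t • wedge a b := by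
  funext I J
  simp only [wedge, Pi.smul_apply, smul_eq_mul, Finset.mul_sum]
  refine Finset.sum_congr rfl fun _ _ => Finset.sum_congr rfl fun _ _ => by ring

lemma zero_wedge {n : ℕ} (a : DForm n) : wedge 0 a = 0 := by
  funext I J
  simp [wedge]

lemma wedge_zero {n : ℕ} (a : DForm n) : wedge a 0 = 0 := by
  funext I J
  simp [wedge]

/-- Type synonym carrying the wedge-product ring structure. -/
def DF (n : ℕ) := DForm n

instance (n : ℕ) : AddCommGroup (DF n) := inferInstanceAs (AddCommGroup (DForm n))
instance (n : ℕ) : Module ℝ (DF n) := inferInstanceAs (Module ℝ (DForm n))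

instance (n : ℕ) : Ring (DF n) :=
  { (inferInstance : AddCommGroup (DF n)) with
    mul := fun a b => wedge (n := n) a b
    one := oneForm n
    mul_assoc := wedge_assoc
    one_mul := one_wedge
    mul_one := wedge_one
    left_distrib := wedge_add
    right_distrib := add_wedge
    zero_mul := zero_wedge
    mul_zero := wedge_zero }

instance (n : ℕ) : Algebra ℝ (DF n) :=
  Algebra.ofModule (fun t a b => smul_wedge t a b) (fun t a b => wedge_smul t a b)

/-- Identity map into the ring. -/
def toDF {n : ℕ} (a : DForm n) : DF n := a

/-- Top coefficient as a linear map. -/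
def top (n : ℕ) : DF n →ₗ[ℝ] ℝ where
  toFun a := (show DForm n from a) Finset.univ Finset.univ
  map_add' _ _ := rfl
  map_smul' _ _ := rfl

lemma toDF_dpow {n : ℕ} (a : DForm n) (k : ℕ) : toDF (dpow a k) = toDF a ^ k := by
  induction k with
  | zero => rfl
  | succ k ih => rw [pow_succ', ← ih]; rfl

lemma toDF_wedge {n : ℕ} (a b : DForm n) : toDF (wedge a b) = toDF a * toDF b := rfl

lemma ofMatrix_singleton {n : ℕ} (h : Matrix (Fin n) (Fin n) ℝ) (i j : Fin n) :
    ofMatrix h {i} {j} = h i j := by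
  unfold ofMatrix
  rw [Finset.sum_eq_single i, Finset.sum_eq_single j]
  · simp
  · intro b _ hb; simp [hb.symm]
  · simp
  · intro b _ hb; simp [hb.symm]
  · simp

lemma ofMatrix_ne_zero {n : ℕ} (h : Matrix (Fin n) (Fin n) ℝ) (I J : Finset (Fin n))
    (hh : ofMatrix h I J ≠ 0) : ∃ i j, I = {i} ∧ J = {j} := by
  unfold ofMatrix at hh
  obtain ⟨i, _, hi⟩ := Finset.exists_ne_zero_of_sum_ne_zero hh
  obtain ⟨j, _, hj⟩ := Finset.exists_ne_zero_of_sum_ne_zero hi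
  by_contra hc
  exact hj (if_neg fun hc' => hc ⟨i, j, hc'⟩)

lemma ofMatrix_eq_zero {n : ℕ} (h : Matrix (Fin n) (Fin n) ℝ) (I J : Finset (Fin n))
    (hh : ¬ ∃ i j, I = {i} ∧ J = {j}) : ofMatrix h I J = 0 := by
  by_contra hc
  exact hh (ofMatrix_ne_zero h I J hc)

lemma ofMatrix_add {n : ℕ} (h h' : Matrix (Fin n) (Fin n) ℝ) :
    ofMatrix (h + h') = ofMatrix h + ofMatrix h' := by
  funext I J
  simp only [ofMatrix, Pi.add_apply, ← Finset.sum_add_distrib]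
  refine Finset.sum_congr rfl fun _ _ => Finset.sum_congr rfl fun _ _ => ?_
  split_ifs <;> simp

lemma ofMatrix_smul {n : ℕ} (t : ℝ) (h : Matrix (Fin n) (Fin n) ℝ) :
    ofMatrix (t • h) = t • ofMatrix h := by
  funext I J
  simp only [ofMatrix, Pi.smul_apply, smul_eq_mul, Finset.mul_sum]
  refine Finset.sum_congr rfl fun _ _ => Finset.sum_congr rfl fun _ _ => ?_
  split_ifs <;> simp

lemma gMetric_eq (n : ℕ) : gMetric n = ofMatrix (1 : Matrix (Fin n) (Fin n) ℝ) := by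
  funext I J
  by_cases hc : ∃ i j, I = {i} ∧ J = {j}
  · obtain ⟨i, j, rfl, rfl⟩ := hc
    rw [ofMatrix_singleton]
    simp [gMetric, Matrix.one_apply]
  · rw [ofMatrix_eq_zero _ _ _ hc]
    unfold gMetric
    rw [if_neg]
    rintro ⟨rfl, h⟩
    obtain ⟨i, rfl⟩ := Finset.card_eq_one.1 h
    exact hc ⟨i, i, rfl, rfl⟩

lemma shuffleSign_swap {n : ℕ} {i j : Fin n} (h : i ≠ j) :
    shuffleSign {i} {j} = - shuffleSign {j} {i} := by
  unfold shuffleSign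
  rcases lt_or_gt_of_ne h with h' | h' <;>
  simp [Finset.filter_singleton, h', h'.not_gt]

lemma wedge_ofMatrix_comm {n : ℕ} (h h' : Matrix (Fin n) (Fin n) ℝ) :
    wedge (ofMatrix h) (ofMatrix h') = wedge (ofMatrix h') (ofMatrix h) := by
  have key : ∀ (I : Finset (Fin n)) (F : Finset (Fin n) → Finset (Fin n) → ℝ),
      ∑ A ∈ I.powerset, F A (I \ A) = ∑ A ∈ I.powerset, F (I \ A) A := by
    intro I F
    refine Finset.sum_bij' (fun A _ => I \ A) (fun A _ => I \ A) ?_ ?_ ?_ ?_ ?_ <;>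
      intro A hA <;> rw [Finset.mem_powerset] at hA <;>
      simp [Finset.inter_eq_right.2 hA]
  funext I J
  unfold wedge
  rw [key I (fun P Q => ∑ B ∈ J.powerset,
    shuffleSign P Q * shuffleSign B (J \ B) * ofMatrix h P B * ofMatrix h' Q (J \ B))]
  refine Finset.sum_congr rfl fun A hA => ?_
  rw [key J (fun P Q =>
    shuffleSign (I \ A) A * shuffleSign P Q * ofMatrix h (I \ A) P * ofMatrix h' A Q)]
  refine Finset.sum_congr rfl fun B hB => ?_
  by_cases h1 : ∃ i j, A = {i} ∧ B = {j}
  swap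
  · simp [ofMatrix_eq_zero h' _ _ h1]
  by_cases h2 : ∃ i j, I \ A = {i} ∧ J \ B = {j}
  swap
  · simp [ofMatrix_eq_zero h _ _ h2]
  obtain ⟨i, j, hi, hj⟩ := h1
  obtain ⟨i', j', hi', hj'⟩ := h2
  have d1 : Disjoint A (I \ A) := Finset.disjoint_sdiff
  have d2 : Disjoint B (J \ B) := Finset.disjoint_sdiff
  rw [hi, hi'] at *
  rw [hj, hj'] at *
  rw [Finset.disjoint_singleton] at d1 d2
  rw [shuffleSign_swap d1, shuffleSign_swap d2]
  ring

lemma shuffleSign_erase {n k : ℕ} (u : Fin (k + 1) → Fin n) (hu : StrictMono u)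
    (i : Fin (k + 1)) :
    shuffleSign {u i} (Finset.image u Finset.univ \ {u i}) = (-1) ^ (i : ℕ) := by
  unfold shuffleSign
  congr 1
  have : ∀ x ∈ Finset.image u Finset.univ \ {u i},
      (Finset.filter (fun a => x < a) {u i}).card = if x < u i then 1 else 0 := by
    intro x _
    rw [Finset.filter_singleton]
    split_ifs <;> simp
  rw [Finset.sum_congr rfl this, ← Finset.card_filter]
  have : Finset.filter (fun x => x < u i) (Finset.image u Finset.univ \ {u i}) =
      Finset.image u (Finset.Iio i) := by
    ext x
    simp only [Finset.mem_filter, Finset.mem_sdiff, Finset.mem_image, Finset.mem_univ, true_and,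
      Finset.mem_singleton, Finset.mem_Iio]
    constructor
    · rintro ⟨⟨⟨a, rfl⟩, _⟩, h⟩
      exact ⟨a, hu.lt_iff_lt.1 h, rfl⟩
    · rintro ⟨a, h, rfl⟩
      exact ⟨⟨⟨a, rfl⟩, (hu h).ne⟩, hu h⟩
  rw [this, Finset.card_image_of_injective _ hu.injective, Fin.card_Iio]

lemma image_erase {n k : ℕ} (u : Fin (k + 1) → Fin n) (hu : StrictMono u)
    (i : Fin (k + 1)) :
    Finset.image u Finset.univ \ {u i} = Finset.image (u ∘ i.succAbove) Finset.univ := by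
  ext x
  simp only [Finset.mem_sdiff, Finset.mem_image, Finset.mem_univ, true_and,
      Finset.mem_singleton, Function.comp]
  constructor
  · rintro ⟨⟨a, rfl⟩, h⟩
    have : a ≠ i := fun h' => h (by rw [h'])
    obtain ⟨b, rfl⟩ := Fin.exists_succAbove_eq this
    exact ⟨b, rfl⟩
  · rintro ⟨a, rfl⟩
    exact ⟨⟨_, rfl⟩, fun h => Fin.succAbove_ne i a (hu.injective h)⟩

lemma sum_powerset_image {n k : ℕ} (u : Fin k → Fin n) (hu : StrictMono u)
    (F : Finset (Fin n) → ℝ) (hF : ∀ A, (¬ ∃ i, A = {i}) → F A = 0) :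
    ∑ A ∈ (Finset.image u Finset.univ).powerset, F A = ∑ i, F {u i} := by
  symm
  refine Finset.sum_of_injOn (fun i => {u i}) ?_ ?_ ?_ ?_
  · intro a _ b _ h
    exact hu.injective (Finset.singleton_injective h)
  · intro a _
    simp
  · intro A hA hA'
    apply hF
    rintro ⟨i, rfl⟩
    simp at hA hA'
    obtain ⟨a, rfl⟩ := hA
    exact hA' a rfl
  · intros; rfl

lemma dpow_ofMatrix_eq {n : ℕ} (h : Matrix (Fin n) (Fin n) ℝ) (k : ℕ) :
    ∀ (u v : Fin k → Fin n), StrictMono u → StrictMono v →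
    dpow (ofMatrix h) k (Finset.image u Finset.univ) (Finset.image v Finset.univ) =
      (k.factorial : ℝ) * (h.submatrix u v).det := by
  induction k with
  | zero => intro u v _ _; simp [dpow]
  | succ k ih =>
    intro u v hu hv
    change wedge (ofMatrix h) (dpow (ofMatrix h) k) _ _ = _
    unfold wedge
    rw [sum_powerset_image u hu]
    · have hrow : ∀ i : Fin (k + 1), (∑ B ∈ (Finset.image v Finset.univ).powerset,
          shuffleSign {u i} (Finset.image u Finset.univ \ {u i}) *
            shuffleSign B (Finset.image v Finset.univ \ B) * ofMatrix h {u i} B *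
            dpow (ofMatrix h) k (Finset.image u Finset.univ \ {u i})
              (Finset.image v Finset.univ \ B)) =
          (k.factorial : ℝ) * (h.submatrix u v).det := by
        intro i
        rw [sum_powerset_image v hv]
        · rw [Matrix.det_succ_row _ i, Finset.mul_sum]
          refine Finset.sum_congr rfl fun j _ => ?_
          rw [shuffleSign_erase u hu, shuffleSign_erase v hv, image_erase u hu, image_erase v hv,
            ih _ _ (hu.comp (Fin.strictMono_succAbove i)) (hv.comp (Fin.strictMono_succAbove j)),
            ofMatrix_singleton, pow_add, Matrix.submatrix_submatrix, Matrix.submatrix_apply]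
          ring
        · intro B hB
          rw [ofMatrix_eq_zero]
          · simp
          · rintro ⟨i, j, _, rfl⟩
            exact hB ⟨j, rfl⟩
      rw [Finset.sum_congr rfl fun i _ => hrow i]
      simp [Nat.factorial_succ]
      ring
    · intro A hA
      refine Finset.sum_eq_zero fun B _ => ?_
      rw [ofMatrix_eq_zero]
      · simp
      · rintro ⟨i, j, rfl, _⟩
        exact hA ⟨i, rfl⟩

lemma top_pow {n : ℕ} (h : Matrix (Fin n) (Fin n) ℝ) :
    top n (toDF (ofMatrix h) ^ n) = (n.factorial : ℝ) * h.det := by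
  rw [← toDF_dpow]
  have := dpow_ofMatrix_eq h n id id strictMono_id strictMono_id
  rw [Finset.image_id, Matrix.submatrix_id_id] at this
  exact this

lemma toDF_commute {n : ℕ} (h h' : Matrix (Fin n) (Fin n) ℝ) :
    Commute (toDF (ofMatrix h)) (toDF (ofMatrix h')) := wedge_ofMatrix_comm h h'

lemma dinner_hstar {n : ℕ} (a b : DForm n) :
    dinner (hstar a) b = top n (toDF a * toDF b) := by
  change _ = wedge a b Finset.univ Finset.univ
  unfold dinner wedge hstar
  rw [Finset.powerset_univ]
  refine Fintype.sum_equiv (compl_involutive.toPerm _) _ _ fun I => ?_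
  refine Fintype.sum_equiv (compl_involutive.toPerm _) _ _ fun J => ?_
  simp [Function.Involutive.coe_toPerm]

lemma charpoly_eq {n : ℕ} (h : Matrix (Fin n) (Fin n) ℝ) :
    h.charpoly = ∑ m ∈ Finset.range (n + 1),
      Polynomial.C ((n.factorial : ℝ)⁻¹ * (n.choose m) * (-1) ^ (n - m) *
        top n (toDF (ofMatrix 1) ^ m * toDF (ofMatrix h) ^ (n - m))) * Polynomial.X ^ m := by
  refine Polynomial.funext fun t => ?_
  rw [Matrix.eval_charpoly, Polynomial.eval_finsetSum]
  have h1 : Matrix.scalar (Fin n) t - h = t • (1 : Matrix (Fin n) (Fin n) ℝ) + (-1 : ℝ) • h := by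
    rw [Matrix.smul_one_eq_diagonal]
    simp [sub_eq_add_neg, Matrix.scalar_apply]
  have h2 := top_pow (Matrix.scalar (Fin n) t - h)
  have h3 : toDF (ofMatrix (Matrix.scalar (Fin n) t - h)) =
      t • toDF (ofMatrix 1) + (-1 : ℝ) • toDF (ofMatrix h) := by
    rw [h1, ofMatrix_add, ofMatrix_smul, ofMatrix_smul]; rfl
  have hc : Commute (t • toDF (ofMatrix (1 : Matrix (Fin n) (Fin n) ℝ)))
      ((-1 : ℝ) • toDF (ofMatrix h)) :=
    ((toDF_commute 1 h).smul_left t).smul_right (-1 : ℝ)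
  rw [h3, hc.add_pow, map_sum] at h2
  have hn : (n.factorial : ℝ) ≠ 0 := by exact_mod_cast n.factorial_ne_zero
  rw [← mul_right_inj' hn, ← h2, Finset.mul_sum]
  refine Finset.sum_congr rfl fun m _ => ?_
  rw [smul_pow, smul_pow, smul_mul_smul_comm, ← nsmul_eq_mul', map_nsmul, map_smul]
  simp only [Polynomial.eval_mul, Polynomial.eval_C, Polynomial.eval_pow, Polynomial.eval_X,
    nsmul_eq_mul, smul_eq_mul]
  field_simp

lemma sInv_eq {n : ℕ} (h : Matrix (Fin n) (Fin n) ℝ) (k : ℕ) (hk : k ≤ n) :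
    sInv h k = ((k.factorial : ℝ) * ((n - k).factorial : ℝ))⁻¹ *
      top n (toDF (ofMatrix 1) ^ (n - k) * toDF (ofMatrix h) ^ k) := by
  unfold sInv
  rw [charpoly_eq, Polynomial.finsetSum_coeff, Finset.sum_eq_single (n - k)]
  · rw [Polynomial.coeff_C_mul_X_pow, if_pos rfl, Nat.sub_sub_self hk, Nat.choose_symm hk]
    have := Nat.choose_mul_factorial_mul_factorial hk
    have h' : (n.factorial : ℝ) = n.choose k * k.factorial * (n - k).factorial := by
      exact_mod_cast this.symm
    have hc : (n.choose k : ℝ) ≠ 0 := by exact_mod_cast (Nat.choose_pos hk).ne'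
    have h1 : ((-1 : ℝ) ^ k) * (-1) ^ k = 1 := by rw [← mul_pow]; simp
    rw [h']
    field_simp
    rw [pow_two, h1, one_mul]
  · intro b _ hb
    rw [Polynomial.coeff_C_mul_X_pow, if_neg hb.symm]
  · intro hb
    exact absurd (Finset.mem_range.2 (by omega)) hb

end DForm

open DForm in
/-- `s_k` of a sum: `s_k(A+B) = ∑_{i=0}^k (1/(k-i)!) ⟨s_{(k-i,i)}(A), B^{k-i}⟩`. -/
theorem statement9 (n : ℕ) (A B : Matrix (Fin n) (Fin n) ℝ) (k : ℕ)
    (hk1 : 1 ≤ k) (hk2 : k ≤ n) :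
    sInv (A + B) k =
      ∑ i ∈ Finset.range (k + 1),
        (((k - i).factorial : ℕ) : ℝ)⁻¹ *
          dinner (sCof A (k - i) i) (dpow (ofMatrix B) (k - i)) := by
  rw [sInv_eq _ _ hk2]
  have h3 : toDF (ofMatrix (A + B)) = toDF (ofMatrix A) + toDF (ofMatrix B) := by
    rw [ofMatrix_add]; rfl
  rw [h3, (toDF_commute A B).add_pow, Finset.mul_sum, map_sum, Finset.mul_sum]
  refine Finset.sum_congr rfl fun i hi => ?_
  have hi' : i ≤ k := by rw [Finset.mem_range] at hi; omega
  have hs : ∀ (t : ℝ) (a b : DForm n), dinner (t • a) b = t * dinner a b := by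
    intro t a b
    simp only [dinner, Pi.smul_apply, smul_eq_mul, Finset.mul_sum, mul_assoc]
  unfold sCof
  rw [hs, dinner_hstar, toDF_wedge, toDF_dpow, toDF_dpow, toDF_dpow, gMetric_eq,
    show n - i - (k - i) = n - k by omega, ← nsmul_eq_mul' (toDF (ofMatrix A) ^ i * _), mul_smul_comm, map_nsmul,
    nsmul_eq_mul, mul_assoc (toDF (ofMatrix 1) ^ (n - k))]
  have h' : (k.factorial : ℝ) = k.choose i * i.factorial * (k - i).factorial := by
    exact_mod_cast (Nat.choose_mul_factorial_mul_factorial hi').symm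
  have hc : (k.choose i : ℝ) ≠ 0 := by exact_mod_cast (Nat.choose_pos hi').ne'
  rw [h']
  push_cast
  field_simp
end
end

section
/- Let ω be a symmetric (p,p)-double form satisfying the first Bianchi identity on an n-dimensional real inner product space (V,g), and let q ≥ 1 be an integer with n ≥ 2pq. Then the Avez-type expansion c^{2pq}(ω^{2q})/(2pq)! = Σ_{r=0}^{pq} ((−1)^{r+pq}/(r!)²)·⟨c^r(ω^q), c^r(ω^q)⟩ holds. -/
noncomputable section

open Finset

namespace DForm

variable {n : ℕ}

/-- elementary sign -/
def sg (a b : Fin n) : ℝ := if b < a then -1 else 1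

lemma sg_mul_self (a b : Fin n) : sg a b * sg a b = 1 := by
  unfold sg; split_ifs <;> norm_num

lemma sg_swap {a b : Fin n} (h : a ≠ b) : sg a b * sg b a = -1 := by
  unfold sg
  rcases lt_or_gt_of_ne h with h | h
  · simp [h, h.le, not_lt.mpr h.le]
  · simp [h, not_lt.mpr h.le]

lemma ss_eq (A B : Finset (Fin n)) : shuffleSign A B = ∏ b ∈ B, ∏ a ∈ A, sg a b := by
  unfold shuffleSign sg
  rw [← Finset.prod_pow_eq_pow_sum]
  refine Finset.prod_congr rfl fun b _ => ?_
  rw [Finset.prod_ite]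
  simp

lemma ss_union_right (A : Finset (Fin n)) {B C : Finset (Fin n)} (h : Disjoint B C) :
    shuffleSign A (B ∪ C) = shuffleSign A B * shuffleSign A C := by
  simp only [ss_eq]
  rw [Finset.prod_union h]

lemma ss_union_left {A B : Finset (Fin n)} (C : Finset (Fin n)) (h : Disjoint A B) :
    shuffleSign (A ∪ B) C = shuffleSign A C * shuffleSign B C := by
  simp only [ss_eq]
  rw [← Finset.prod_mul_distrib]
  exact Finset.prod_congr rfl fun b _ => Finset.prod_union h

lemma ss_sq (A B : Finset (Fin n)) : shuffleSign A B * shuffleSign A B = 1 := by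
  simp only [ss_eq, ← Finset.prod_mul_distrib, sg_mul_self, Finset.prod_const_one]

lemma ss_swap {A B : Finset (Fin n)} (h : Disjoint A B) :
    shuffleSign A B * shuffleSign B A = (-1) ^ (A.card * B.card) := by
  simp only [ss_eq]
  rw [Finset.prod_comm (s := A), ← Finset.prod_mul_distrib]
  simp only [← Finset.prod_mul_distrib]
  have : ∀ b ∈ B, ∏ a ∈ A, sg a b * sg b a = (-1) ^ A.card := by
    intro b hb
    rw [← Finset.prod_const]
    refine Finset.prod_congr rfl fun a ha => sg_swap ?_
    rintro rfl
    exact Finset.disjoint_left.mp h ha hb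
  rw [Finset.prod_congr rfl this, Finset.prod_const, pow_mul]

lemma ss_symmDiff_left (A B C : Finset (Fin n)) :
    shuffleSign A C * shuffleSign B C = shuffleSign (symmDiff A B) C := by
  have h1 : A = (A \ B) ∪ (A ∩ B) := by ext; simp; tauto
  have h2 : B = (B \ A) ∪ (A ∩ B) := by ext; simp; tauto
  have d1 : Disjoint (A \ B) (A ∩ B) := by
    rw [Finset.disjoint_left]; simp; tauto
  have d2 : Disjoint (B \ A) (A ∩ B) := by
    rw [Finset.disjoint_left]; simp; tauto
  have d3 : Disjoint (A \ B) (B \ A) := by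
    rw [Finset.disjoint_left]; simp; tauto
  have h3 : symmDiff A B = (A \ B) ∪ (B \ A) := rfl
  have e1 := ss_union_left C d1
  have e2 := ss_union_left C d2
  rw [← h1] at e1
  rw [← h2] at e2
  rw [e1, e2, h3, ss_union_left C d3]
  linear_combination shuffleSign (A \ B) C * shuffleSign (B \ A) C * ss_sq (A ∩ B) C

lemma ss_symmDiff_right (A B C : Finset (Fin n)) :
    shuffleSign C A * shuffleSign C B = shuffleSign C (symmDiff A B) := by
  have h1 : A = (A \ B) ∪ (A ∩ B) := by ext; simp; tauto
  have h2 : B = (B \ A) ∪ (A ∩ B) := by ext; simp; tauto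
  have d1 : Disjoint (A \ B) (A ∩ B) := by
    rw [Finset.disjoint_left]; simp; tauto
  have d2 : Disjoint (B \ A) (A ∩ B) := by
    rw [Finset.disjoint_left]; simp; tauto
  have d3 : Disjoint (A \ B) (B \ A) := by
    rw [Finset.disjoint_left]; simp; tauto
  have h3 : symmDiff A B = (A \ B) ∪ (B \ A) := rfl
  have e1 := ss_union_right C d1
  have e2 := ss_union_right C d2
  rw [← h1] at e1
  rw [← h2] at e2
  rw [e1, e2, h3, ss_union_right C d3]
  linear_combination shuffleSign C (A \ B) * shuffleSign C (B \ A) * ss_sq C (A ∩ B)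

/-- iterated contraction, explicitly -/
lemma citer_eq (θ : DForm n) (k : ℕ) (I J : Finset (Fin n)) :
    citer θ k I J = (k.factorial : ℝ) * ∑ K : Finset (Fin n),
      if K.card = k ∧ Disjoint K I ∧ Disjoint K J then
        shuffleSign K I * shuffleSign K J * θ (K ∪ I) (K ∪ J) else 0 := by
  induction k generalizing I J with
  | zero =>
    rw [Finset.sum_eq_single ∅]
    · simp [citer, ss_eq]
    · intro b _ hb
      rw [if_neg]
      simp [hb]
    · simp
  | succ k ih =>
    simp only [citer, contr]
    simp only [ih]
    set G : Finset (Fin n) → ℝ := fun K =>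
      if K.card = k + 1 ∧ Disjoint K I ∧ Disjoint K J then
        shuffleSign K I * shuffleSign K J * θ (K ∪ I) (K ∪ J) else 0 with hG
    have key : ∀ j : Fin n, (if j ∈ I ∨ j ∈ J then (0 : ℝ)
        else shuffleSign {j} I * shuffleSign {j} J * ((k.factorial : ℝ) * ∑ K : Finset (Fin n),
      if K.card = k ∧ Disjoint K (insert j I) ∧ Disjoint K (insert j J) then
        shuffleSign K (insert j I) * shuffleSign K (insert j J) *
          θ (K ∪ insert j I) (K ∪ insert j J) else 0))
        = (k.factorial : ℝ) * ∑ K : Finset (Fin n), if j ∈ K then G K else 0 := by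
      intro j
      split_ifs with hj
      · rw [Finset.sum_eq_zero, mul_zero]
        intro K _
        split_ifs with hK
        · simp only [hG]
          rw [if_neg]
          rintro ⟨_, h1, h2⟩
          rcases hj with hj | hj
          · exact Finset.disjoint_left.mp h1 hK hj
          · exact Finset.disjoint_left.mp h2 hK hj
        · rfl
      · push Not at hj
        rw [mul_left_comm, Finset.mul_sum]
        congr 1
        rw [← Finset.sum_filter (fun K => j ∈ K)]
        have : ∀ K : Finset (Fin n), (shuffleSign {j} I * shuffleSign {j} J *
          if K.card = k ∧ Disjoint K (insert j I) ∧ Disjoint K (insert j J) then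
            shuffleSign K (insert j I) * shuffleSign K (insert j J) *
            θ (K ∪ insert j I) (K ∪ insert j J) else 0) =
            if j ∉ K then G (insert j K) else 0 := by
          intro K
          by_cases hK : j ∈ K
          · simp [hK]
          · have hc : (insert j K).card = K.card + 1 := Finset.card_insert_of_notMem hK
            simp only [hG, hc, hK, hj, Finset.disjoint_insert_left, Finset.disjoint_insert_right,
              not_false_eq_true, true_and, if_true, Nat.add_right_cancel_iff]
            split_ifs with h
            · have dI : Disjoint ({j} : Finset (Fin n)) I := by simpa using hj.1
              have dJ : Disjoint ({j} : Finset (Fin n)) J := by simpa using hj.2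
              have dK : Disjoint ({j} : Finset (Fin n)) K := by simpa using hK
              rw [Finset.union_insert, Finset.union_insert, ← Finset.insert_union,
                ← Finset.insert_union]
              rw [Finset.insert_eq j I, Finset.insert_eq j J, Finset.insert_eq j K,
                ss_union_right K dI, ss_union_right K dJ, ss_union_left I dK, ss_union_left J dK]
              linear_combination (shuffleSign {j} I * shuffleSign K I *
                (shuffleSign {j} J * shuffleSign K J) * θ (({j} ∪ K) ∪ I) (({j} ∪ K) ∪ J)) *
                ss_sq K {j}
            · simp
        rw [Finset.sum_congr rfl fun K _ => this K, ← Finset.sum_filter]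
        refine Finset.sum_bij' (fun K _ => insert j K) (fun K _ => K.erase j) ?_ ?_ ?_ ?_ ?_
        · simp
        · simp
        · intro K hK
          simp at hK
          exact Finset.erase_insert hK
        · intro K hK
          simp at hK
          exact Finset.insert_erase hK
        · intros; rfl
    rw [Finset.sum_congr rfl fun j _ => key j, ← Finset.mul_sum, Finset.sum_comm]
    have : ∀ K : Finset (Fin n), (∑ j : Fin n, if j ∈ K then G K else 0) = (k + 1) * G K := by
      intro K
      rw [← Finset.sum_filter]
      simp only [Finset.sum_const, nsmul_eq_mul, Finset.filter_mem_eq_inter, Finset.univ_inter]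
      by_cases h : K.card = k + 1
      · rw [h]; push_cast; ring
      · have : G K = 0 := by simp [hG, h]
        rw [this]; simp
    rw [Finset.sum_congr rfl fun K _ => this K, ← Finset.mul_sum, Nat.factorial_succ]
    push_cast
    ring

lemma wedge_deg {α β : DForm n} {a b c d : ℕ} (hα : IsOfDeg α a b) (hβ : IsOfDeg β c d) :
    IsOfDeg (wedge α β) (a + c) (b + d) := by
  intro I J h
  obtain ⟨A, hA, h⟩ := Finset.exists_ne_zero_of_sum_ne_zero h
  obtain ⟨B, hB, h⟩ := Finset.exists_ne_zero_of_sum_ne_zero h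
  have h1 := hα A B (by rintro h0; simp [h0] at h)
  have h2 := hβ (I \ A) (J \ B) (by rintro h0; simp [h0] at h)
  rw [Finset.mem_powerset] at hA hB
  have := Finset.card_sdiff_add_card_eq_card hA
  have := Finset.card_sdiff_add_card_eq_card hB
  omega

lemma dpow_deg {ω : DForm n} {p : ℕ} (h : IsOfDeg ω p p) (k : ℕ) :
    IsOfDeg (dpow ω k) (p * k) (p * k) := by
  induction k with
  | zero =>
    intro I J h
    simp only [dpow] at h
    have : I = ∅ ∧ J = ∅ := by by_contra h0; simp [h0] at h
    simp [this]
  | succ k ih =>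
    have := wedge_deg h ih
    rw [mul_add, mul_one, add_comm (p * k) p]
    exact this

lemma wedge_sym {α β : DForm n} (hα : IsSym α) (hβ : IsSym β) : IsSym (wedge α β) := by
  intro I J
  simp only [wedge]
  rw [Finset.sum_comm]
  refine Finset.sum_congr rfl fun B _ => Finset.sum_congr rfl fun A _ => ?_
  rw [hα A B, hβ (I \ A) (J \ B)]
  ring

lemma dpow_sym {ω : DForm n} (h : IsSym ω) (k : ℕ) : IsSym (dpow ω k) := by
  induction k with
  | zero => intro I J; simp only [dpow, and_comm]
  | succ k ih => exact wedge_sym h ih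

lemma one_wedge_s18 (ω : DForm n) (β : DForm n) : wedge (dpow ω 0) β = β := by
  funext I J
  simp only [wedge, dpow]
  rw [Finset.sum_eq_single ∅, Finset.sum_eq_single ∅]
  · simp [ss_eq]
  · intro B _ hB
    simp [hB]
  · simp
  · intro B _ hB
    simp [hB]
  · simp

/-- splitting reindexation for associativity -/
lemma sum_split (I : Finset (Fin n)) (f : Finset (Fin n) → Finset (Fin n) → Finset (Fin n) → ℝ) :
    ∑ S ∈ I.powerset, ∑ A ∈ S.powerset, f A (S \ A) (I \ S) =
    ∑ A ∈ I.powerset, ∑ B ∈ (I \ A).powerset, f A B ((I \ A) \ B) := by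
  rw [Finset.sum_sigma', Finset.sum_sigma']
  refine Finset.sum_bij' (fun x _ => ⟨x.2, x.1 \ x.2⟩) (fun x _ => ⟨x.1 ∪ x.2, x.1⟩) ?_ ?_ ?_ ?_ ?_
  · rintro ⟨S, A⟩ h
    simp only [Finset.mem_sigma, Finset.mem_powerset] at h ⊢
    exact ⟨h.2.trans h.1, Finset.sdiff_subset_sdiff h.1 le_rfl⟩
  · rintro ⟨A, B⟩ h
    simp only [Finset.mem_sigma, Finset.mem_powerset] at h ⊢
    exact ⟨Finset.union_subset h.1 (h.2.trans Finset.sdiff_subset), Finset.subset_union_left⟩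
  · rintro ⟨S, A⟩ h
    simp only [Finset.mem_sigma, Finset.mem_powerset] at h
    simp [Finset.union_sdiff_of_subset h.2]
  · rintro ⟨A, B⟩ h
    simp only [Finset.mem_sigma, Finset.mem_powerset] at h
    have : Disjoint A B := (Finset.subset_sdiff.mp h.2).2.symm
    simp [Finset.union_sdiff_cancel_left this]
  · rintro ⟨S, A⟩ h
    simp only [Finset.mem_sigma, Finset.mem_powerset] at h
    have : (I \ A) \ (S \ A) = I \ S := by
      rw [sdiff_sdiff_left, Finset.sup_eq_union, Finset.union_sdiff_of_subset h.2]
    simp [this]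

lemma cocycle {A B C : Finset (Fin n)} (h1 : Disjoint A B) (h3 : Disjoint B C) :
    shuffleSign (A ∪ B) C * shuffleSign A B = shuffleSign A (B ∪ C) * shuffleSign B C := by
  rw [ss_union_left C h1, ss_union_right A h3]; ring

lemma wedge_assoc_s18 (α β γ : DForm n) : wedge (wedge α β) γ = wedge α (wedge β γ) := by
  funext I J
  simp only [wedge]
  have L : ∀ S ∈ I.powerset, ∀ T ∈ J.powerset,
      shuffleSign S (I \ S) * shuffleSign T (J \ T) *
        (∑ A ∈ S.powerset, ∑ B ∈ T.powerset, shuffleSign A (S \ A) * shuffleSign B (T \ B) *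
          α A B * β (S \ A) (T \ B)) * γ (I \ S) (J \ T) =
      ∑ A ∈ S.powerset, ∑ B ∈ T.powerset,
        (fun A A' A'' B B' B'' => shuffleSign (A ∪ A') A'' * shuffleSign A A' *
          (shuffleSign (B ∪ B') B'' * shuffleSign B B') * α A B * β A' B' * γ A'' B'')
          A (S \ A) (I \ S) B (T \ B) (J \ T) := by
    intro S _ T _
    simp only [Finset.mul_sum, Finset.sum_mul]
    refine Finset.sum_congr rfl fun A hA => Finset.sum_congr rfl fun B hB => ?_
    rw [Finset.mem_powerset] at hA hB
    rw [Finset.union_sdiff_of_subset hA, Finset.union_sdiff_of_subset hB]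
    ring
  rw [Finset.sum_congr rfl fun S hS => Finset.sum_congr rfl fun T hT => L S hS T hT]
  have R : ∀ A ∈ I.powerset, ∀ B ∈ J.powerset,
      shuffleSign A (I \ A) * shuffleSign B (J \ B) * α A B *
        (∑ A' ∈ (I \ A).powerset, ∑ B' ∈ (J \ B).powerset,
          shuffleSign A' ((I \ A) \ A') * shuffleSign B' ((J \ B) \ B') *
          β A' B' * γ ((I \ A) \ A') ((J \ B) \ B')) =
      ∑ A' ∈ (I \ A).powerset, ∑ B' ∈ (J \ B).powerset,
        (fun A A' A'' B B' B'' => shuffleSign (A ∪ A') A'' * shuffleSign A A' *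
          (shuffleSign (B ∪ B') B'' * shuffleSign B B') * α A B * β A' B' * γ A'' B'')
          A A' ((I \ A) \ A') B B' ((J \ B) \ B') := by
    intro A _ B _
    simp only [Finset.mul_sum]
    refine Finset.sum_congr rfl fun A' hA => Finset.sum_congr rfl fun B' hB => ?_
    rw [Finset.mem_powerset] at hA hB
    rw [cocycle (Finset.subset_sdiff.mp hA).2.symm Finset.disjoint_sdiff,
      cocycle (Finset.subset_sdiff.mp hB).2.symm Finset.disjoint_sdiff,
      Finset.union_sdiff_of_subset hA, Finset.union_sdiff_of_subset hB]
    ring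
  rw [Finset.sum_congr rfl fun S hS => Finset.sum_congr rfl fun T hT => R S hS T hT]
  generalize (fun A A' A'' B B' B'' : Finset (Fin n) => shuffleSign (A ∪ A') A'' *
    shuffleSign A A' * (shuffleSign (B ∪ B') B'' * shuffleSign B B') * α A B * β A' B' *
    γ A'' B'') = F
  calc _ = ∑ S ∈ I.powerset, ∑ A ∈ S.powerset, ∑ T ∈ J.powerset, ∑ B ∈ T.powerset,
        F A (S \ A) (I \ S) B (T \ B) (J \ T) :=
        Finset.sum_congr rfl fun S _ => Finset.sum_comm
    _ = ∑ S ∈ I.powerset, ∑ A ∈ S.powerset, ∑ B ∈ J.powerset, ∑ B' ∈ (J \ B).powerset,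
        F A (S \ A) (I \ S) B B' ((J \ B) \ B') :=
        Finset.sum_congr rfl fun S _ => Finset.sum_congr rfl fun A _ =>
          sum_split J (F A (S \ A) (I \ S))
    _ = ∑ A ∈ I.powerset, ∑ A' ∈ (I \ A).powerset, ∑ B ∈ J.powerset, ∑ B' ∈ (J \ B).powerset,
        F A A' ((I \ A) \ A') B B' ((J \ B) \ B') :=
        sum_split I (fun A A' A'' => ∑ B ∈ J.powerset, ∑ B' ∈ (J \ B).powerset,
          F A A' A'' B B' ((J \ B) \ B'))
    _ = _ := Finset.sum_congr rfl fun S _ => Finset.sum_comm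

lemma dpow_add (ω : DForm n) (a b : ℕ) : dpow ω (a + b) = wedge (dpow ω a) (dpow ω b) := by
  induction a with
  | zero => rw [zero_add, one_wedge_s18]
  | succ a ih =>
    rw [Nat.succ_add]
    simp only [dpow]
    rw [ih, wedge_assoc_s18]

/-- quadruples -/
abbrev Q4 (n : ℕ) := (Finset (Fin n) × Finset (Fin n)) × (Finset (Fin n) × Finset (Fin n))

/-- admissible quadruples `((K,L),(Y,Z))` -/
def adm (x : Q4 n) : Prop := (Disjoint x.1.1 x.2.1 ∧ Disjoint x.1.1 x.2.2) ∧
  (Disjoint x.1.2 x.2.1 ∧ Disjoint x.1.2 x.2.2)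

/-- the summand -/
def term (α : DForm n) (P : ℕ) (x : Q4 n) : ℝ :=
  (-1) ^ (x.1.1.card + P) * shuffleSign (symmDiff x.1.1 x.1.2) (symmDiff x.2.1 x.2.2) *
    (α (x.1.1 ∪ x.2.1) (x.1.1 ∪ x.2.2) * α (x.1.2 ∪ x.2.1) (x.1.2 ∪ x.2.2))

/-- the singleton of the minimum -/
def mn (D : Finset (Fin n)) : Finset (Fin n) := D.filter fun a => ∀ b ∈ D, a ≤ b

lemma mn_eq {D : Finset (Fin n)} (h : D.Nonempty) : ∃ x ∈ D, mn D = {x} := by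
  refine ⟨D.min' h, D.min'_mem h, ?_⟩
  ext a
  simp only [mn, Finset.mem_filter, Finset.mem_singleton]
  constructor
  · rintro ⟨ha, hb⟩
    exact le_antisymm (hb _ (D.min'_mem h)) (D.min'_le _ ha)
  · rintro rfl
    exact ⟨D.min'_mem h, fun b hb => D.min'_le _ hb⟩

/-- bad set -/
def bad (x : Q4 n) : Finset (Fin n) := (x.1.1 ∩ x.1.2) ∪ (x.2.1 ∩ x.2.2)

/-- toggling -/
def tog (x : Q4 n) (m : Finset (Fin n)) : Q4 n :=
  ((symmDiff x.1.1 m, symmDiff x.1.2 m), (symmDiff x.2.1 m, symmDiff x.2.2 m))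

lemma tog_tog (x : Q4 n) (m : Finset (Fin n)) : tog (tog x m) m = x := by
  simp [tog]

lemma tog_adm {x : Q4 n} (h : adm x) {a : Fin n} (ha : a ∈ bad x) : adm (tog x {a}) := by
  obtain ⟨⟨K, L⟩, Y, Z⟩ := x
  simp only [adm, bad, tog, Finset.disjoint_left, Finset.mem_symmDiff, Finset.mem_union,
    Finset.mem_inter, Finset.mem_singleton] at *
  grind

lemma tog_bad {x : Q4 n} (h : adm x) {a : Fin n} (ha : a ∈ bad x) : bad (tog x {a}) = bad x := by
  obtain ⟨⟨K, L⟩, Y, Z⟩ := x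
  ext b
  simp only [adm, bad, tog, Finset.disjoint_left, Finset.mem_symmDiff, Finset.mem_union,
    Finset.mem_inter, Finset.mem_singleton] at *
  grind

lemma pow_card_symmDiff (K : Finset (Fin n)) (a : Fin n) :
    (-1 : ℝ) ^ (symmDiff K {a}).card = - (-1) ^ K.card := by
  by_cases h : a ∈ K
  · have : symmDiff K {a} = K.erase a := by
      ext b; simp only [Finset.mem_symmDiff, Finset.mem_singleton, Finset.mem_erase]; grind
    rw [this, ← Finset.card_erase_add_one h, pow_succ]; ring
  · have : symmDiff K {a} = insert a K := by
      ext b; simp only [Finset.mem_symmDiff, Finset.mem_singleton, Finset.mem_insert]; grind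
    rw [this, Finset.card_insert_of_notMem h, pow_succ]; ring

lemma tog_term (α : DForm n) (P : ℕ) {x : Q4 n} (h : adm x) {a : Fin n} (ha : a ∈ bad x) :
    term α P (tog x {a}) = - term α P x := by
  obtain ⟨⟨K, L⟩, Y, Z⟩ := x
  have hs : ∀ U W : Finset (Fin n), symmDiff (symmDiff U {a}) (symmDiff W {a}) = symmDiff U W := by
    intro U W
    ext b
    simp only [Finset.mem_symmDiff, Finset.mem_singleton]
    tauto
  have hu : symmDiff K {a} ∪ symmDiff Y {a} = K ∪ Y ∧ symmDiff K {a} ∪ symmDiff Z {a} = K ∪ Z ∧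
      symmDiff L {a} ∪ symmDiff Y {a} = L ∪ Y ∧ symmDiff L {a} ∪ symmDiff Z {a} = L ∪ Z := by
    simp only [adm, bad, Finset.disjoint_left, Finset.mem_union, Finset.mem_inter] at h ha
    refine ⟨?_, ?_, ?_, ?_⟩ <;> ext b <;>
      simp only [Finset.mem_symmDiff, Finset.mem_union, Finset.mem_singleton] <;> grind
  obtain ⟨h1, h2, h3, h4⟩ := hu
  simp only [term, tog, hs, h1, h2, h3, h4, pow_add, pow_card_symmDiff]
  ring

open Classical in
lemma sum_cancel (α : DForm n) (P : ℕ) :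
    ∑ x : Q4 n, (if adm x then term α P x else 0) =
      ∑ x : Q4 n, (if adm x ∧ bad x = ∅ then term α P x else 0) := by
  rw [← sub_eq_zero, ← Finset.sum_sub_distrib]
  have : ∀ x : Q4 n, (if adm x then term α P x else 0) -
      (if adm x ∧ bad x = ∅ then term α P x else 0) =
      if adm x ∧ (bad x).Nonempty then term α P x else 0 := by
    intro x
    rcases (bad x).eq_empty_or_nonempty with h | h
    · simp [h]
    · simp [h, h.ne_empty]
  rw [Finset.sum_congr rfl fun x _ => this x, ← Finset.sum_filter]
  have hk : ∀ x ∈ Finset.univ.filter (fun x : Q4 n => adm x ∧ (bad x).Nonempty),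
      ∃ a ∈ bad x, mn (bad x) = {a} ∧ adm x := by
    intro x hx
    simp only [Finset.mem_filter, Finset.mem_univ, true_and] at hx
    obtain ⟨a, h1, h2⟩ := mn_eq hx.2
    exact ⟨a, h1, h2, hx.1⟩
  refine Finset.sum_involution (fun x _ => tog x (mn (bad x))) ?_ ?_ ?_ ?_
  · intro x hx
    obtain ⟨a, ha, hm, h⟩ := hk x hx
    rw [hm, tog_term α P h ha]; ring
  · intro x hx _ he
    obtain ⟨a, ha, hm, h⟩ := hk x hx
    rw [hm] at he
    have := congrArg (fun y : Q4 n => y.1.1) he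
    simp [tog] at this
  · intro x hx
    obtain ⟨a, ha, hm, h⟩ := hk x hx
    rw [hm]
    simp only [Finset.mem_filter, Finset.mem_univ, true_and]
    refine ⟨tog_adm h ha, ?_⟩
    rw [tog_bad h ha]
    exact ⟨a, ha⟩
  · intro x hx
    obtain ⟨a, ha, hm, h⟩ := hk x hx
    rw [hm, tog_bad h ha, hm, tog_tog]

open Classical in
lemma rhs_eq (α : DForm n) (P : ℕ) (hα : IsOfDeg α P P) :
    ∑ r ∈ Finset.range (P + 1), ((-1 : ℝ) ^ (r + P) / ((r.factorial : ℝ)) ^ 2) *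
          dinner (citer α r) (citer α r) =
    ∑ x : Q4 n, (if adm x then term α P x else 0) := by
  have h1 : ∀ r, ((-1 : ℝ) ^ (r + P) / ((r.factorial : ℝ)) ^ 2) *
          dinner (citer α r) (citer α r) =
      ∑ x : Q4 n, if x.1.1.card = r then (if adm x then term α P x else 0) else 0 := by
    intro r
    have hr : (r.factorial : ℝ) ≠ 0 := by positivity
    simp only [dinner, citer_eq]
    rw [Fintype.sum_prod_type_right]
    rw [Fintype.sum_prod_type, Finset.mul_sum]
    refine Finset.sum_congr rfl fun Y _ => ?_
    rw [Finset.mul_sum]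
    refine Finset.sum_congr rfl fun Z _ => ?_
    rw [Fintype.sum_prod_type]
    set f : Finset (Fin n) → ℝ := fun K => if K.card = r ∧ Disjoint K Y ∧ Disjoint K Z then
        shuffleSign K Y * shuffleSign K Z * α (K ∪ Y) (K ∪ Z) else 0 with hf
    have : ((-1 : ℝ) ^ (r + P) / ((r.factorial : ℝ)) ^ 2) *
        ((r.factorial : ℝ) * (∑ K, f K) * ((r.factorial : ℝ) * ∑ K, f K)) =
        (-1 : ℝ) ^ (r + P) * ((∑ K, f K) * (∑ K, f K)) := by
      field_simp
    rw [this, Finset.sum_mul_sum, Finset.mul_sum]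
    refine Finset.sum_congr rfl fun K _ => ?_
    rw [Finset.mul_sum]
    refine Finset.sum_congr rfl fun L _ => ?_
    simp only [hf, adm]
    by_cases hK : K.card = r
    · by_cases hL : L.card = r
      · by_cases hd : Disjoint K Y ∧ Disjoint K Z
        · by_cases hd' : Disjoint L Y ∧ Disjoint L Z
          · simp only [hK, hL, hd, hd', and_self, if_true, term]
            rw [← ss_symmDiff_right, ← ss_symmDiff_left, ← ss_symmDiff_left]
            ring
          · simp [hd']
        · simp [hd]
      · simp only [hK, hL, false_and, if_false, mul_zero, if_true]
        split_ifs with had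
        · simp only [term]
          by_contra hne
          have e1 := hα (K ∪ Y) (K ∪ Z) (by intro h0; simp [h0] at hne)
          have e2 := hα (L ∪ Y) (L ∪ Z) (by intro h0; simp [h0] at hne)
          rw [Finset.card_union_of_disjoint had.1.1] at e1
          rw [Finset.card_union_of_disjoint had.2.1] at e2
          omega
        · exact (if_neg (c := adm ((K, L), Y, Z)) had).symm
    · simp [hK]
  rw [Finset.sum_congr rfl fun r _ => h1 r, Finset.sum_comm]
  refine Finset.sum_congr rfl fun x _ => ?_
  rw [Finset.sum_ite_eq]
  split_ifs with h2 h3 h3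
  · rfl
  · rfl
  · simp only [term]
    by_contra hne
    have e1 := hα (x.1.1 ∪ x.2.1) (x.1.1 ∪ x.2.2) (by intro h0; simp [h0] at hne)
    rw [Finset.card_union_of_disjoint h3.1.1] at e1
    simp only [Finset.mem_range] at h2
    omega
  · rfl

open Classical in
lemma lhs_eq (α : DForm n) (P : ℕ) (hα : IsOfDeg α P P) (hs : IsSym α) :
    ∑ I : Finset (Fin n), wedge α α I I =
    ∑ x : Q4 n, (if adm x ∧ bad x = ∅ then term α P x else 0) := by
  simp only [wedge]
  rw [← Finset.sum_filter]
  simp_rw [← Finset.sum_product']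
  rw [Finset.sum_sigma']
  refine Finset.sum_bij'
    (fun y _ => ((y.2.1 ∩ y.2.2, y.1 \ (y.2.1 ∪ y.2.2)), (y.2.1 \ y.2.2, y.2.2 \ y.2.1)))
    (fun x _ => ⟨(x.1.1 ∪ x.1.2) ∪ (x.2.1 ∪ x.2.2), (x.1.1 ∪ x.2.1, x.1.1 ∪ x.2.2)⟩) ?_ ?_ ?_ ?_ ?_
  · rintro ⟨I, S, T⟩ h
    simp only [Finset.mem_filter, Finset.mem_univ, true_and, adm, bad, Finset.disjoint_left,
      Finset.eq_empty_iff_forall_notMem, Finset.mem_union, Finset.mem_inter, Finset.mem_sdiff]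
    grind
  · rintro ⟨⟨K, L⟩, Y, Z⟩ h
    simp only [Finset.mem_sigma, Finset.mem_univ, true_and, Finset.mem_product,
      Finset.mem_powerset]
    constructor <;> intro b <;> simp only [Finset.mem_union] <;> tauto
  · rintro ⟨I, S, T⟩ h
    simp only [Finset.mem_sigma, Finset.mem_univ, true_and, Finset.mem_product,
      Finset.mem_powerset] at h
    have e1 : S ∩ T ∪ S \ T = S := by ext b; simp; tauto
    have e2 : S ∩ T ∪ T \ S = T := by ext b; simp; tauto
    have e3 : (S ∩ T ∪ I \ (S ∪ T)) ∪ (S \ T ∪ T \ S) = I := by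
      ext b
      have := @h.1 b
      have := @h.2 b
      simp only [Finset.mem_union, Finset.mem_inter, Finset.mem_sdiff]
      tauto
    simp only [e1, e2, e3]
  · rintro ⟨⟨K, L⟩, Y, Z⟩ h
    simp only [Finset.mem_filter, Finset.mem_univ, true_and, adm, bad, Finset.disjoint_left,
      Finset.eq_empty_iff_forall_notMem, Finset.mem_union, Finset.mem_inter] at h
    simp only [Prod.mk.injEq]
    refine ⟨⟨?_, ?_⟩, ?_, ?_⟩ <;> ext b <;>
      simp only [Finset.mem_union, Finset.mem_inter, Finset.mem_sdiff] <;> grind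
  · rintro ⟨I, S, T⟩ h
    simp only [Finset.mem_sigma, Finset.mem_univ, true_and, Finset.mem_product,
      Finset.mem_powerset] at h
    obtain ⟨hS, hT⟩ := h
    simp only [term]
    obtain ⟨K, hK⟩ : ∃ K, K = S ∩ T := ⟨_, rfl⟩
    obtain ⟨L, hL⟩ : ∃ L, L = I \ (S ∪ T) := ⟨_, rfl⟩
    obtain ⟨Y, hY⟩ : ∃ Y, Y = S \ T := ⟨_, rfl⟩
    obtain ⟨Z, hZ⟩ : ∃ Z, Z = T \ S := ⟨_, rfl⟩
    have e1 : S = K ∪ Y := by subst hK hY; ext b; simp; tauto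
    have e2 : T = K ∪ Z := by subst hK hZ; ext b; simp; tauto
    have e3 : I \ S = L ∪ Z := by
      subst hL hZ; ext b
      have := @hS b
      have := @hT b
      simp only [Finset.mem_union, Finset.mem_sdiff]
      tauto
    have e4 : I \ T = L ∪ Y := by
      subst hL hY; ext b
      have := @hS b
      have := @hT b
      simp only [Finset.mem_union, Finset.mem_sdiff]
      tauto
    have dKY : Disjoint K Y := by
      subst hK hY; rw [Finset.disjoint_left]; simp; tauto
    have dKZ : Disjoint K Z := by
      subst hK hZ; rw [Finset.disjoint_left]; simp; tauto
    have dLY : Disjoint L Y := by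
      subst hL hY; rw [Finset.disjoint_left]; simp; tauto
    have dLZ : Disjoint L Z := by
      subst hL hZ; rw [Finset.disjoint_left]; simp; tauto
    have dYZ : Disjoint Y Z := by
      subst hY hZ; rw [Finset.disjoint_left]; simp; tauto
    rw [← hK, ← hL, ← hY, ← hZ, e3, e4, e1, e2]
    rw [hs (L ∪ Z) (L ∪ Y)]
    by_cases h0 : α (K ∪ Y) (K ∪ Z) = 0
    · simp [h0]
    obtain ⟨c1, c2⟩ := hα _ _ h0
    rw [Finset.card_union_of_disjoint dKY] at c1
    rw [Finset.card_union_of_disjoint dKZ] at c2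
    have hYZ : Z.card = Y.card := by omega
    rw [← ss_symmDiff_right, ← ss_symmDiff_left, ← ss_symmDiff_left,
      ss_union_left _ dKY, ss_union_left _ dKZ, ss_union_right _ dLZ, ss_union_right _ dLZ,
      ss_union_right _ dLY, ss_union_right _ dLY]
    have w1 := ss_swap dLY
    have w2 := ss_swap dLZ
    have w3 := ss_swap dYZ
    have w4 : shuffleSign L Y * shuffleSign Y L * (shuffleSign L Z * shuffleSign Z L) *
        (shuffleSign Y Z * shuffleSign Z Y) = (-1) ^ (K.card + P) := by
      rw [w1, w2, w3, hYZ, ← c1, ← pow_add, ← pow_add]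
      have hy : Even (Y.card * (Y.card + 1)) := Nat.even_mul_succ_self _
      apply neg_one_pow_congr
      rw [Nat.even_add, Nat.even_add, Nat.even_add, Nat.even_add, Nat.even_mul, Nat.even_mul]
      tauto
    rw [← w4]
    have q1 := ss_sq K L
    have q2 := ss_sq L Y
    have q3 := ss_sq L Z
    linear_combination (exp := 1) (shuffleSign K Z * shuffleSign K Y * shuffleSign Y L *
      shuffleSign Y Z * shuffleSign Z L * shuffleSign Z Y *
      α (K ∪ Y) (K ∪ Z) * α (L ∪ Y) (L ∪ Z)) * (q1 - q2 * shuffleSign L Z * shuffleSign L Z - q3)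

end DForm

open DForm in
/-- General Avez-type expansion:
`c^{2pq}(ω^{2q})/(2pq)! = ∑_{r=0}^{pq} ((-1)^{r+pq}/(r!)²) ⟨c^r(ω^q), c^r(ω^q)⟩`. -/
theorem statement18 (n p q : ℕ) (hp : 1 ≤ p) (ω : DForm n) (hsym : IsSym ω)
    (hb : FirstBianchi ω p) (hgr : IsOfDeg ω p p) (hq : 1 ≤ q) (hn : 2 * p * q ≤ n) :
    toScalar (citer (dpow ω (2 * q)) (2 * p * q)) / ((2 * p * q).factorial : ℝ) =
      ∑ r ∈ Finset.range (p * q + 1),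
        ((-1 : ℝ) ^ (r + p * q) / ((r.factorial : ℝ)) ^ 2) *
          dinner (citer (dpow ω q) r) (citer (dpow ω q) r) := by
  have hd := dpow_deg hgr q
  rw [rhs_eq _ _ hd, sum_cancel, ← lhs_eq _ _ hd (dpow_sym hsym q), two_mul q, dpow_add,
    toScalar, citer_eq, mul_div_cancel_left₀ _ (by positivity)]
  refine Finset.sum_congr rfl fun K _ => ?_
  simp only [Finset.disjoint_empty_right, and_true, Finset.union_empty]
  split_ifs with h
  · simp [ss_eq]
  · by_contra hne
    have := (wedge_deg hd hd) K K (fun h0 => hne h0.symm)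
    apply h
    rw [this.1]; ring
end
end
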